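/- There exists an absolute constant c > 0 such that for every d ≥ 1, every n ∈ ℕ and every function f : {0,1}^n → {0,1}, E_x[‖∇f(x)‖₂] ≥ c·√d·W_{≈d}[f]. -/

import Mathlib

open Finset

noncomputable section

/-- Expectation over the uniform distribution on `{0,1}^n`. -/
def hcExp (n : ℕ) (g : (Fin n → Bool) → ℝ) : ℝ :=
  (∑ x : Fin n → Bool, g x) / 2 ^ n

/-- Flip the `i`-th coordinate of `x`. -/
def hcFlip {n : ℕ} (x : Fin n → Bool) (i : Fin n) : Fin n → Bool :=
  Function.update x i (!(x i))

/-- Sensitivity of `f` at `x`. -/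
def sens {n : ℕ} (f : (Fin n → Bool) → Bool) (x : Fin n → Bool) : ℕ :=
  (Finset.univ.filter fun i => f (hcFlip x i) ≠ f x).card

/-- `f` with values in `{0,1} ⊆ ℝ`. -/
def toReal {n : ℕ} (f : (Fin n → Bool) → Bool) : (Fin n → Bool) → ℝ :=
  fun x => if f x then 1 else 0

/-- Variance of a Boolean function. -/
def hcVar (n : ℕ) (f : (Fin n → Bool) → Bool) : ℝ :=
  hcExp n (toReal f) - (hcExp n (toReal f)) ^ 2

/-- Influence of coordinate `i`. -/
def influence (n : ℕ) (f : (Fin n → Bool) → Bool) (i : Fin n) : ℝ :=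
  hcExp n (fun x => if f (hcFlip x i) = f x then 0 else 1)

/-- Fourier character. -/
def chi {n : ℕ} (S : Finset (Fin n)) (x : Fin n → Bool) : ℝ :=
  ∏ i ∈ S, (if x i then (-1 : ℝ) else 1)

/-- Fourier coefficient of `g` at `S`. -/
def fcoef (n : ℕ) (g : (Fin n → Bool) → ℝ) (S : Finset (Fin n)) : ℝ :=
  hcExp n (fun x => g x * chi S x)

/-- Derivative of `g` along coordinate `i`. -/
def derivOn {n : ℕ} (g : (Fin n → Bool) → ℝ) (i : Fin n) (x : Fin n → Bool) : ℝ :=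
  g (Function.update x i false) - g (Function.update x i true)

/-- Euclidean norm of the gradient of `g` at `x`. -/
def gradNorm2 {n : ℕ} (g : (Fin n → Bool) → ℝ) (x : Fin n → Bool) : ℝ :=
  Real.sqrt (∑ i, (derivOn g i x) ^ 2)

/-- `ℓ_p` norm of the gradient of `g` at `x`. -/
def gradNormP {n : ℕ} (p : ℝ) (g : (Fin n → Bool) → ℝ) (x : Fin n → Bool) : ℝ :=
  (∑ i, |derivOn g i x| ^ p) ^ (1 / p)

/-- Fourier weight at exactly level `d`. -/
def wEq (n : ℕ) (g : (Fin n → Bool) → ℝ) (d : ℕ) : ℝ :=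
  ∑ S ∈ Finset.univ.filter (fun S : Finset (Fin n) => S.card = d), (fcoef n g S) ^ 2

/-- Approximate level-`d` Fourier weight: levels in `[d, 2d)`. -/
def wApprox (n : ℕ) (g : (Fin n → Bool) → ℝ) (d : ℕ) : ℝ :=
  ∑ S ∈ Finset.univ.filter (fun S : Finset (Fin n) => d ≤ S.card ∧ S.card < 2 * d),
    (fcoef n g S) ^ 2

/-- Fourier weight at levels `≥ d`. -/
def wGe (n : ℕ) (g : (Fin n → Bool) → ℝ) (d : ℕ) : ℝ :=
  ∑ S ∈ Finset.univ.filter (fun S : Finset (Fin n) => d ≤ S.card), (fcoef n g S) ^ 2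

/-!
Restrict `g` to the subcubes in a set `J` of directions. At each point `x`, the level-one Fourier
coefficients of the restriction through `x` form a vector of norm at most `M = sup |g|`, so by
Cauchy–Schwarz their inner product with the partial gradient `(∂_i g(x))_{i ∈ J}` is at most `M`
times the norm of the latter. Averaged over `x`, the inner product is twice the Fourier weight of
`g` on the sets meeting `J` in exactly one element.

Now let `J` contain each direction independently with probability `p = 1 / (4 d)`. A set of size in
`[d, 2d)` meets `J` in exactly one element with probability at least `1 / 8`, while by Jensen's
inequality the partial gradient has expected norm at most `√p ‖∇g(x)‖₂`; the gain `1 / √p` is of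
order `√d`.
-/

variable {n : ℕ}

section Expectation

variable {g h : (Fin n → Bool) → ℝ}

lemma hcExp_mono (hgh : ∀ x, g x ≤ h x) : hcExp n g ≤ hcExp n h := by
  unfold hcExp
  gcongr with x
  exact hgh x

lemma hcExp_const (c : ℝ) : hcExp n (fun _ => c) = c := by
  simp [hcExp]

lemma hcExp_add : hcExp n (fun x => g x + h x) = hcExp n g + hcExp n h := by
  simp only [hcExp, sum_add_distrib, add_div]

lemma hcExp_const_mul (c : ℝ) : hcExp n (fun x => c * g x) = c * hcExp n g := by
  simp only [hcExp, ← mul_sum, mul_div_assoc]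

lemma hcExp_sum {ι : Type*} (s : Finset ι) (G : ι → (Fin n → Bool) → ℝ) :
    hcExp n (fun x => ∑ i ∈ s, G i x) = ∑ i ∈ s, hcExp n (G i) := by
  simp only [hcExp, ← sum_div]
  rw [sum_comm]

lemma hcFlip_involutive (i : Fin n) : Function.Involutive fun x : Fin n → Bool => hcFlip x i :=
  fun x => by simp [hcFlip]

lemma hcExp_comp_hcFlip (g : (Fin n → Bool) → ℝ) (i : Fin n) :
    hcExp n (fun x => g (hcFlip x i)) = hcExp n g :=
  congrArg (· / 2 ^ n) (Equiv.sum_comp (hcFlip_involutive i).toPerm g)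

end Expectation

section Characters

variable {S T : Finset (Fin n)} {i : Fin n}

lemma ite_neg_one_mul_self (b : Bool) :
    (if b then (-1 : ℝ) else 1) * (if b then -1 else 1) = 1 := by
  cases b <;> norm_num

lemma chi_mul_self (S : Finset (Fin n)) (x : Fin n → Bool) : chi S x * chi S x = 1 := by
  simp only [chi, ← prod_mul_distrib, ite_neg_one_mul_self, prod_const_one]

lemma ite_neg_one_mul_chi_erase (hi : i ∈ S) (x : Fin n → Bool) :
    (if x i then -1 else 1) * chi (S.erase i) x = chi S x :=
  mul_prod_erase S (fun j => if x j then (-1 : ℝ) else 1) hi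

lemma chi_hcFlip_of_notMem (hi : i ∉ S) (x : Fin n → Bool) : chi S (hcFlip x i) = chi S x :=
  prod_congr rfl fun j hj => by simp [hcFlip, ne_of_mem_of_not_mem hj hi]

lemma chi_hcFlip_of_mem (hi : i ∈ S) (x : Fin n → Bool) : chi S (hcFlip x i) = -chi S x := by
  rw [← ite_neg_one_mul_chi_erase hi, ← ite_neg_one_mul_chi_erase hi,
    chi_hcFlip_of_notMem (notMem_erase i S)]
  cases h : x i <;> simp [hcFlip, h]

lemma hcExp_chi_mul_chi_of_mem_of_notMem (hS : i ∈ S) (hT : i ∉ T) :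
    hcExp n (fun x => chi S x * chi T x) = 0 := by
  have hneg : hcExp n (fun x => chi S x * chi T x) = -hcExp n (fun x => chi S x * chi T x) :=
    calc hcExp n (fun x => chi S x * chi T x)
        = hcExp n (fun x => chi S (hcFlip x i) * chi T (hcFlip x i)) :=
          (hcExp_comp_hcFlip (fun x => chi S x * chi T x) i).symm
      _ = hcExp n (fun x => -1 * (chi S x * chi T x)) := by
          simp only [chi_hcFlip_of_mem hS, chi_hcFlip_of_notMem hT, neg_mul, one_mul]
      _ = -hcExp n (fun x => chi S x * chi T x) := by rw [hcExp_const_mul, neg_one_mul]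
  linarith

lemma fcoef_chi (S T : Finset (Fin n)) : fcoef n (chi S) T = if S = T then 1 else 0 := by
  unfold fcoef
  split_ifs with hST
  · simp only [hST, chi_mul_self, hcExp_const]
  · obtain ⟨i, ⟨hS, hT⟩ | ⟨hS, hT⟩⟩ : ∃ i, i ∈ S ∧ i ∉ T ∨ i ∉ S ∧ i ∈ T := by
      grind
    · exact hcExp_chi_mul_chi_of_mem_of_notMem hS hT
    · simp only [mul_comm (chi S _)]
      exact hcExp_chi_mul_chi_of_mem_of_notMem hT hS

lemma sum_chi_mul_chi (x y : Fin n → Bool) :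
    ∑ S, chi S x * chi S y = if x = y then 2 ^ n else 0 := by
  have hprod : ∑ S, chi S x * chi S y =
      ∏ i, (1 + (if x i then (-1 : ℝ) else 1) * (if y i then -1 else 1)) := by
    simp only [prod_one_add, powerset_univ, chi, prod_mul_distrib]
  rw [hprod]
  split_ifs with hxy
  · simp only [hxy, ite_neg_one_mul_self, one_add_one_eq_two, prod_const, card_univ,
      Fintype.card_fin]
  · obtain ⟨i, hi⟩ := Function.ne_iff.mp hxy
    refine prod_eq_zero (mem_univ i) ?_
    cases hx : x i <;> cases hy : y i <;> simp_all

end Characters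

section FourierExpansion

variable (g : (Fin n → Bool) → ℝ)

lemma sum_fcoef_mul_chi (x : Fin n → Bool) : ∑ S, fcoef n g S * chi S x = g x := by
  simp only [fcoef, hcExp, div_mul_eq_mul_div, sum_mul]
  rw [← sum_div, sum_comm]
  simp [mul_assoc, ← mul_sum, sum_chi_mul_chi]

lemma sum_sq_fcoef : ∑ S, fcoef n g S ^ 2 = hcExp n (fun x => g x ^ 2) :=
  calc ∑ S, fcoef n g S ^ 2
      = hcExp n (fun x => ∑ S, fcoef n g S * (g x * chi S x)) := by
        simp only [hcExp_sum, hcExp_const_mul, sq]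
        rfl
    _ = hcExp n (fun x => g x ^ 2) := by
        simp only [mul_left_comm _ (g _), ← mul_sum, sum_fcoef_mul_chi, sq]

lemma derivOn_eq_ite_neg_one_mul (i : Fin n) (x : Fin n → Bool) :
    derivOn g i x = (if x i then -1 else 1) * (g x - g (hcFlip x i)) := by
  have hx : Function.update x i (x i) = x := Function.update_eq_self i x
  cases h : x i <;> rw [h] at hx <;> simp [derivOn, hcFlip, h, hx]

lemma fcoef_derivOn_erase {i : Fin n} {S : Finset (Fin n)} (hi : i ∈ S) :
    fcoef n (derivOn g i) (S.erase i) = 2 * fcoef n g S := by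
  have hpoint (x : Fin n → Bool) : derivOn g i x * chi (S.erase i) x =
      g x * chi S x + g (hcFlip x i) * chi S (hcFlip x i) := by
    rw [derivOn_eq_ite_neg_one_mul, chi_hcFlip_of_mem hi, ← ite_neg_one_mul_chi_erase hi]
    ring
  rw [fcoef]
  simp only [hpoint]
  rw [hcExp_add, hcExp_comp_hcFlip (fun x => g x * chi S x), ← two_mul, fcoef]

end FourierExpansion

section CardInter

variable {ι A : Type*} [Fintype ι] [DecidableEq ι] [AddCommMonoid A]

lemma sum_filter_card_inter_eq (S : Finset ι) (k : ℕ) (c : Finset ι → A) :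
    ∑ J with #(S ∩ J) = k, c J = ∑ T ∈ powersetCard k S, ∑ J with S ∩ J = T, c J := by
  have hmaps : ∀ J ∈ ({J | #(S ∩ J) = k} : Finset (Finset ι)), S ∩ J ∈ powersetCard k S :=
    fun J hJ => mem_powersetCard.mpr ⟨inter_subset_left, (mem_filter.mp hJ).2⟩
  rw [← sum_fiberwise_of_maps_to hmaps]
  refine sum_congr rfl fun T hT => ?_
  rw [filter_filter, ← (mem_powersetCard.mp hT).2]
  congr! 2 with J
  simp +contextual

lemma sum_filter_card_inter_eq_one (S : Finset ι) (c : Finset ι → A) :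
    ∑ J with #(S ∩ J) = 1, c J = ∑ i ∈ S, ∑ J with S ∩ J = {i}, c J := by
  rw [sum_filter_card_inter_eq, powersetCard_one, sum_map, Function.Embedding.coeFn_mk]

end CardInter

section Restriction

/-- The restriction of `g` to the subcube through `x` in the directions `J`. It is kept as a
function on the whole cube that ignores the coordinates of its argument outside `J`, so that
`fcoef` applies to it. -/
def hcRestrict (J : Finset (Fin n)) (g : (Fin n → Bool) → ℝ) (x : Fin n → Bool) :
    (Fin n → Bool) → ℝ :=
  fun y => g (J.piecewise y x)

variable (J : Finset (Fin n)) (g : (Fin n → Bool) → ℝ)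

lemma chi_piecewise (S : Finset (Fin n)) (x y : Fin n → Bool) :
    chi S (J.piecewise y x) = chi (S \ J) x * chi (J ∩ S) y := by
  rw [mul_comm, inter_comm, chi, chi, chi, ← prod_piecewise]
  refine prod_congr rfl fun i _ => ?_
  by_cases hi : i ∈ J <;> simp [hi]

lemma fcoef_hcRestrict (x : Fin n → Bool) (T : Finset (Fin n)) :
    fcoef n (hcRestrict J g x) T = ∑ S with J ∩ S = T, fcoef n g S * chi (S \ J) x :=
  calc fcoef n (hcRestrict J g x) T
      = hcExp n (fun y => ∑ S, fcoef n g S * chi (S \ J) x * (chi (J ∩ S) y * chi T y)) := by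
        unfold fcoef hcRestrict
        congr! 2 with y
        rw [← sum_fcoef_mul_chi g (J.piecewise y x), sum_mul]
        simp only [chi_piecewise, mul_assoc]
        rfl
    _ = ∑ S, fcoef n g S * chi (S \ J) x * fcoef n (chi (J ∩ S)) T := by
        simp only [hcExp_sum, hcExp_const_mul]
        rfl
    _ = ∑ S with J ∩ S = T, fcoef n g S * chi (S \ J) x := by
        simp only [fcoef_chi, mul_ite, mul_one, mul_zero, sum_filter]

lemma hcExp_derivOn_mul_fcoef_hcRestrict (i : Fin n) :
    hcExp n (fun x => derivOn g i x * fcoef n (hcRestrict J g x) {i}) =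
      2 * ∑ S with J ∩ S = {i}, fcoef n g S ^ 2 := by
  simp only [fcoef_hcRestrict, mul_sum, mul_left_comm (derivOn g i _), hcExp_sum, hcExp_const_mul]
  refine sum_congr rfl fun S hS => ?_
  have hJS : J ∩ S = {i} := (mem_filter.mp hS).2
  have hi : i ∈ S := inter_subset_right (hJS ▸ mem_singleton_self i)
  have hsdiff : S \ J = S.erase i := by
    rw [← sdiff_inter_self_right, hJS, sdiff_singleton_eq_erase]
  rw [hsdiff, ← fcoef, fcoef_derivOn_erase g hi]
  ring

variable {g} {M : ℝ}

lemma sum_sq_fcoef_singleton_le (hg : ∀ x, |g x| ≤ M) :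
    ∑ i ∈ J, fcoef n g {i} ^ 2 ≤ M ^ 2 :=
  calc ∑ i ∈ J, fcoef n g {i} ^ 2
      = ∑ S ∈ J.map ⟨singleton, singleton_injective⟩, fcoef n g S ^ 2 := by
        rw [sum_map, Function.Embedding.coeFn_mk]
    _ ≤ ∑ S, fcoef n g S ^ 2 :=
        sum_le_univ_sum_of_nonneg fun S => sq_nonneg (fcoef n g S)
    _ = hcExp n (fun x => g x ^ 2) := sum_sq_fcoef g
    _ ≤ hcExp n (fun _ => M ^ 2) := hcExp_mono fun x => sq_le_sq' (abs_le.mp (hg x)).1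
        (abs_le.mp (hg x)).2
    _ = M ^ 2 := hcExp_const _

lemma sum_derivOn_mul_fcoef_hcRestrict_le (hg : ∀ x, |g x| ≤ M) (x : Fin n → Bool) :
    ∑ i ∈ J, derivOn g i x * fcoef n (hcRestrict J g x) {i} ≤
      M * √(∑ i ∈ J, derivOn g i x ^ 2) := by
  have hM : 0 ≤ M := (abs_nonneg _).trans (hg x)
  have hlevelOne : √(∑ i ∈ J, fcoef n (hcRestrict J g x) {i} ^ 2) ≤ M :=
    (Real.sqrt_le_left hM).mpr (sum_sq_fcoef_singleton_le J fun y => hg (J.piecewise y x))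
  calc _ ≤ √(∑ i ∈ J, derivOn g i x ^ 2) * √(∑ i ∈ J, fcoef n (hcRestrict J g x) {i} ^ 2) :=
        Real.sum_mul_le_sqrt_mul_sqrt _ _ _
    _ ≤ √(∑ i ∈ J, derivOn g i x ^ 2) * M := by gcongr
    _ = M * √(∑ i ∈ J, derivOn g i x ^ 2) := mul_comm _ _

/-- The sum on the left is the average over `x` of the level-one weight of `hcRestrict J g x`. -/
lemma two_mul_sum_card_inter_eq_one_le (hg : ∀ x, |g x| ≤ M) :
    2 * ∑ S with #(J ∩ S) = 1, fcoef n g S ^ 2 ≤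
      M * hcExp n (fun x => √(∑ i ∈ J, derivOn g i x ^ 2)) :=
  calc 2 * ∑ S with #(J ∩ S) = 1, fcoef n g S ^ 2
      = hcExp n (fun x => ∑ i ∈ J, derivOn g i x * fcoef n (hcRestrict J g x) {i}) := by
        simp only [hcExp_sum, hcExp_derivOn_mul_fcoef_hcRestrict, sum_filter_card_inter_eq_one,
          mul_sum]
    _ ≤ hcExp n (fun x => M * √(∑ i ∈ J, derivOn g i x ^ 2)) :=
        hcExp_mono (sum_derivOn_mul_fcoef_hcRestrict_le J hg)
    _ = M * hcExp n (fun x => √(∑ i ∈ J, derivOn g i x ^ 2)) := hcExp_const_mul M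

end Restriction

section RandomSubset

variable {ι : Type*} [Fintype ι]

/-- The probability that a random subset of `ι`, containing each element independently with
probability `p`, equals `J`. -/
def bernoulliWeight (p : ℝ) (J : Finset ι) : ℝ := p ^ #J * (1 - p) ^ (Fintype.card ι - #J)

variable {p : ℝ}

lemma bernoulliWeight_nonneg (hp₀ : 0 ≤ p) (hp₁ : p ≤ 1) (J : Finset ι) :
    0 ≤ bernoulliWeight p J :=
  mul_nonneg (pow_nonneg hp₀ _) (pow_nonneg (sub_nonneg.mpr hp₁) _)

variable (ι p) in
lemma sum_bernoulliWeight : ∑ J : Finset ι, bernoulliWeight p J = 1 := by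
  simp only [bernoulliWeight, Fintype.sum_pow_mul_eq_add_pow, add_sub_cancel, one_pow]

section DecidableEq

variable [DecidableEq ι]

lemma bernoulliWeight_union {S T K : Finset ι} (hTS : T ⊆ S) (hK : K ⊆ Sᶜ) :
    bernoulliWeight p (T ∪ K) =
      p ^ #T * (1 - p) ^ (#S - #T) * (p ^ #K * (1 - p) ^ (#Sᶜ - #K)) := by
  have hdisj : Disjoint T K := (disjoint_compl_right.mono_left hTS).mono_right hK
  have hexp : Fintype.card ι - (#T + #K) = #S - #T + (#Sᶜ - #K) := by
    have := card_le_card hTS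
    have := card_le_card hK
    have := card_add_card_compl S
    omega
  rw [bernoulliWeight, card_union_of_disjoint hdisj, hexp, pow_add, pow_add]
  ring

variable (p) in
lemma sum_bernoulliWeight_inter_eq {S T : Finset ι} (hTS : T ⊆ S) :
    ∑ J with S ∩ J = T, bernoulliWeight p J = p ^ #T * (1 - p) ^ (#S - #T) :=
  calc ∑ J with S ∩ J = T, bernoulliWeight p J
      = ∑ K ∈ Sᶜ.powerset, bernoulliWeight p (T ∪ K) := by
        symm
        refine sum_nbij' (T ∪ ·) (· \ S) ?_ ?_ ?_ ?_ fun _ _ => rfl <;> grind [mem_compl]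
    _ = ∑ K ∈ Sᶜ.powerset, p ^ #T * (1 - p) ^ (#S - #T) * (p ^ #K * (1 - p) ^ (#Sᶜ - #K)) :=
        sum_congr rfl fun K hK => bernoulliWeight_union hTS (mem_powerset.mp hK)
    _ = p ^ #T * (1 - p) ^ (#S - #T) := by
        rw [← mul_sum, sum_pow_mul_eq_add_pow, add_sub_cancel, one_pow, mul_one]

variable (p) in
lemma sum_bernoulliWeight_card_inter_eq (S : Finset ι) (k : ℕ) :
    ∑ J with #(S ∩ J) = k, bernoulliWeight p J =
      (#S).choose k * (p ^ k * (1 - p) ^ (#S - k)) := by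
  rw [sum_filter_card_inter_eq, ← card_powersetCard, ← nsmul_eq_mul, ← sum_const]
  refine sum_congr rfl fun T hT => ?_
  obtain ⟨hTS, rfl⟩ := mem_powersetCard.mp hT
  exact sum_bernoulliWeight_inter_eq p hTS

end DecidableEq

variable (p) in
lemma sum_bernoulliWeight_mul_sum (v : ι → ℝ) :
    ∑ J, bernoulliWeight p J * ∑ i ∈ J, v i = p * ∑ i, v i := by
  classical
  have hmem (i : ι) : ∑ J with i ∈ J, bernoulliWeight p J = p := by
    simpa using sum_bernoulliWeight_inter_eq p (Subset.refl {i})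
  calc ∑ J, bernoulliWeight p J * ∑ i ∈ J, v i
      = ∑ J, ∑ i ∈ J, bernoulliWeight p J * v i := by simp only [mul_sum]
    _ = ∑ i, ∑ J with i ∈ J, bernoulliWeight p J * v i := sum_comm' (by simp)
    _ = p * ∑ i, v i := by simp only [← sum_mul, hmem, mul_sum]

lemma sum_bernoulliWeight_mul_sqrt_sum_le (hp₀ : 0 ≤ p) (hp₁ : p ≤ 1) {v : ι → ℝ}
    (hv : ∀ i, 0 ≤ v i) :
    ∑ J, bernoulliWeight p J * √(∑ i ∈ J, v i) ≤ √p * √(∑ i, v i) :=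
  calc ∑ J, bernoulliWeight p J * √(∑ i ∈ J, v i)
      ≤ √(∑ J, bernoulliWeight p J * ∑ i ∈ J, v i) :=
        Real.strictConcaveOn_sqrt.concaveOn.le_map_sum
          (fun J _ => bernoulliWeight_nonneg hp₀ hp₁ J) (sum_bernoulliWeight ι p)
          fun J _ => sum_nonneg fun i _ => hv i
    _ = √p * √(∑ i, v i) := by rw [sum_bernoulliWeight_mul_sum, Real.sqrt_mul hp₀]

end RandomSubset

section Average

variable {g : (Fin n → Bool) → ℝ} {M p : ℝ}

lemma sum_bernoulliWeight_mul_hcExp_le (g : (Fin n → Bool) → ℝ) (hp₀ : 0 ≤ p) (hp₁ : p ≤ 1) :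
    ∑ J, bernoulliWeight p J * hcExp n (fun x => √(∑ i ∈ J, derivOn g i x ^ 2)) ≤
      √p * hcExp n (gradNorm2 g) := by
  simp only [← hcExp_const_mul, ← hcExp_sum]
  exact hcExp_mono fun x =>
    sum_bernoulliWeight_mul_sqrt_sum_le hp₀ hp₁ fun i => sq_nonneg (derivOn g i x)

lemma two_mul_sum_card_mul_sq_fcoef_le (hg : ∀ x, |g x| ≤ M) (hp₀ : 0 ≤ p) (hp₁ : p ≤ 1) :
    2 * ∑ S, #S * (p * (1 - p) ^ (#S - 1)) * fcoef n g S ^ 2 ≤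
      M * (√p * hcExp n (gradNorm2 g)) := by
  have hM : 0 ≤ M := (abs_nonneg _).trans (hg fun _ => false)
  calc 2 * ∑ S, #S * (p * (1 - p) ^ (#S - 1)) * fcoef n g S ^ 2
      = 2 * ∑ S, ∑ J with #(S ∩ J) = 1, bernoulliWeight p J * fcoef n g S ^ 2 := by
        simp only [← sum_mul, sum_bernoulliWeight_card_inter_eq, Nat.choose_one_right, pow_one]
    _ = ∑ J, bernoulliWeight p J * (2 * ∑ S with #(J ∩ S) = 1, fcoef n g S ^ 2) := by
        rw [sum_comm' (t' := univ) (s' := fun J => {S | #(J ∩ S) = 1}) (by simp [inter_comm])]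
        simp only [mul_sum, mul_left_comm (2 : ℝ)]
    _ ≤ ∑ J, bernoulliWeight p J *
          (M * hcExp n (fun x => √(∑ i ∈ J, derivOn g i x ^ 2))) :=
        sum_le_sum fun J _ => mul_le_mul_of_nonneg_left (two_mul_sum_card_inter_eq_one_le J hg)
          (bernoulliWeight_nonneg hp₀ hp₁ J)
    _ = M * ∑ J, bernoulliWeight p J * hcExp n (fun x => √(∑ i ∈ J, derivOn g i x ^ 2)) := by
        simp only [mul_sum, mul_left_comm M]
    _ ≤ M * (√p * hcExp n (gradNorm2 g)) := by
        gcongr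
        exact sum_bernoulliWeight_mul_hcExp_le g hp₀ hp₁

lemma one_div_four_mul_le_one {d : ℕ} (hd : 1 ≤ d) : (1 : ℝ) / (4 * d) ≤ 1 := by
  have hd' : (1 : ℝ) ≤ d := by exact_mod_cast hd
  exact (div_le_one (by positivity)).mpr (by linarith)

lemma one_eighth_le_mul_one_sub_pow {d k : ℕ} (hdk : d ≤ k) (hkd : k < 2 * d) :
    (1 / 8 : ℝ) ≤ k * (1 / (4 * d) * (1 - 1 / (4 * d)) ^ (k - 1)) := by
  have hd : 1 ≤ d := by omega
  set p : ℝ := 1 / (4 * d) with hp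
  have hpd : p * d = 1 / 4 := by
    rw [hp]
    field_simp
  have hp₀ : 0 ≤ p := by positivity
  have hp₁ : p ≤ 1 := one_div_four_mul_le_one hd
  have hkp : 1 / 4 ≤ k * p := by
    rw [← hpd, mul_comm]
    exact mul_le_mul_of_nonneg_right (by exact_mod_cast hdk) hp₀
  have hpow : 1 / 2 ≤ (1 - p) ^ (k - 1) :=
    calc (1 / 2 : ℝ) = 1 - (2 * d : ℕ) * p := by
          push_cast
          linarith
      _ ≤ 1 - (k - 1 : ℕ) * p := by
          gcongr
          omega
      _ = 1 + (k - 1 : ℕ) * (-p) := by ring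
      _ ≤ (1 + -p) ^ (k - 1) := one_add_mul_le_pow (by linarith) _
      _ = (1 - p) ^ (k - 1) := by rw [← sub_eq_add_neg]
  calc (1 / 8 : ℝ) = 1 / 4 * (1 / 2) := by norm_num
    _ ≤ k * p * (1 - p) ^ (k - 1) := by gcongr
    _ = k * (p * (1 - p) ^ (k - 1)) := mul_assoc _ _ _

lemma one_eighth_mul_wApprox_le (g : (Fin n → Bool) → ℝ) {d : ℕ} (hd : 1 ≤ d) :
    1 / 8 * wApprox n g d ≤
      ∑ S, #S * (1 / (4 * d) * (1 - 1 / (4 * d)) ^ (#S - 1)) * fcoef n g S ^ 2 := by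
  have hq : (0 : ℝ) ≤ 1 - 1 / (4 * d) := sub_nonneg.mpr (one_div_four_mul_le_one hd)
  calc 1 / 8 * wApprox n g d
      = ∑ S with d ≤ #S ∧ #S < 2 * d, 1 / 8 * fcoef n g S ^ 2 := by rw [wApprox, mul_sum]
    _ ≤ ∑ S with d ≤ #S ∧ #S < 2 * d,
          #S * (1 / (4 * d) * (1 - 1 / (4 * d)) ^ (#S - 1)) * fcoef n g S ^ 2 := by
        refine sum_le_sum fun S hS => ?_
        obtain ⟨hdS, hSd⟩ := (mem_filter.mp hS).2
        gcongr
        exact one_eighth_le_mul_one_sub_pow hdS hSd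
    _ ≤ ∑ S, #S * (1 / (4 * d) * (1 - 1 / (4 * d)) ^ (#S - 1)) * fcoef n g S ^ 2 :=
        sum_le_univ_sum_of_nonneg fun S => by positivity

end Average

lemma abs_toReal_le_one (f : (Fin n → Bool) → Bool) (x : Fin n → Bool) : |toReal f x| ≤ 1 := by
  unfold toReal
  split_ifs <;> simp

theorem grad_lower_bound_approx_level_d_general {d : ℕ} (hd : 1 ≤ d) {g : (Fin n → Bool) → ℝ}
    {M : ℝ} (hg : ∀ x, |g x| ≤ M) :
    1 / 2 * √d * wApprox n g d ≤ M * hcExp n (gradNorm2 g) := by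
  have hd₀ : (0 : ℝ) < d := by exact_mod_cast hd
  have hsqrt : 2 * √(d : ℝ) * √(1 / (4 * d)) = 1 := by
    rw [show (1 : ℝ) / (4 * d) = (1 / 2) ^ 2 / d by ring, Real.sqrt_div' _ hd₀.le,
      Real.sqrt_sq (by norm_num)]
    field_simp
  calc 1 / 2 * √d * wApprox n g d
      = 2 * √d * (2 * (1 / 8 * wApprox n g d)) := by ring
    _ ≤ 2 * √d *
          (2 * ∑ S, #S * (1 / (4 * d) * (1 - 1 / (4 * d)) ^ (#S - 1)) * fcoef n g S ^ 2) := by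
        gcongr
        exact one_eighth_mul_wApprox_le g hd
    _ ≤ 2 * √d * (M * (√(1 / (4 * d)) * hcExp n (gradNorm2 g))) := by
        refine mul_le_mul_of_nonneg_left ?_ (by positivity)
        exact two_mul_sum_card_mul_sq_fcoef_le hg (by positivity) (one_div_four_mul_le_one hd)
    _ = 2 * √d * √(1 / (4 * d)) * (M * hcExp n (gradNorm2 g)) := by ring
    _ = M * hcExp n (gradNorm2 g) := by rw [hsqrt, one_mul]

theorem grad_lower_bound_approx_level_d :
    ∃ c : ℝ, 0 < c ∧ ∀ (d : ℕ), 1 ≤ d → ∀ (n : ℕ) (f : (Fin n → Bool) → Bool),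
      hcExp n (fun x => gradNorm2 (toReal f) x) ≥
        c * Real.sqrt d * wApprox n (toReal f) d := by
  refine ⟨1 / 2, by norm_num, fun d hd n f => ?_⟩
  simpa only [one_mul] using grad_lower_bound_approx_level_d_general hd (abs_toReal_le_one f)

end
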